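/- arXiv:math/0507554 — 2 statements merged into one kernel-verified Lean document; each statement's English description precedes it below -/
import Mathlib

section
/- Let R be a Jacobi-Tsankov algebraic curvature tensor with r(x) < m-1 for all x, and let x ⊥ y be unit vectors with J(x)y = 0. Then there is an orthonormal basis of V in which J(x), J(y), and J(x,y) take block forms: J(x) = diag(A, 0, 0), J(y) = diag(0, A, 0), and J(x,y) has ½A in the two off-diagonal blocks of the first two block rows/columns and zeros elsewhere, where A is an invertible diagonal matrix of size r(x). -/
/-!
Write `a = J(x)`, `b = J(y)`, `p = J(x,y)`. Everything follows from three consequences of the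
commutation hypothesis, valid for every Jacobi-Tsankov curvature tensor.

* Duality (`norm_duality`, `eigen_duality`): for orthogonal vectors of equal length, the commutation
  of `J(x + y)` and `J(x - y)` says that `p` commutes with `a + b`; evaluating at `x` and pairing
  with `y` gives `‖J(y)x‖ = ‖J(x)y‖`, so that an eigenvector `y ⊥ x` of `J(x)` makes `x` an
  eigenvector of `J(y)` for the same eigenvalue (up to normalization).
* Separation (`separation`): if `y, z ⊥ x` are eigenvectors of `J(x)` with different eigenvalues,
  then `J(y)z = 0`, because `J(y)` and `J(y,z)` commute with `J(x)` and `J(y)z = -2 J(y,z)y`.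
* One nonzero eigenvalue (`jacobi_sq`): the two previous facts give `J(x)² = λ J(x)`.

If `J(x)y = 0` and `a ≠ 0`, separation gives `ba = 0`, and duality shows that the scalar of `x + s y` is
`λ (1 + s²)`, where `λ` is that of `x`. Comparing coefficients of `s` in
`(a + 2 s p + s² b)² = λ (1 + s²) (a + 2 s p + s² b)` yields
`a² = λa`, `b² = λb`, `ap + pa = λp`, `4p² = λ(a + b)` (`relations_of_ne_zero`).
The degenerate case `a = 0` forces `b = p = 0` (`core_relations`). An orthonormal basis
`eᵢ` of the range of `a`, the vectors `(2/λ) p eᵢ`, and any completion then form the desired basis;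
in particular the diagonal matrix is the scalar matrix `λ`.
-/


open scoped InnerProductSpace
noncomputable section

variable {V : Type*} [NormedAddCommGroup V] [InnerProductSpace ℝ V]

/-- `R` satisfies the symmetries of an algebraic curvature tensor. -/
def IsCurvatureOperator (R : V →ₗ[ℝ] V →ₗ[ℝ] V →ₗ[ℝ] V) : Prop :=
  (∀ x y z w : V, ⟪R x y z, w⟫_ℝ = ⟪R z w x, y⟫_ℝ) ∧
  (∀ x y z w : V, ⟪R x y z, w⟫_ℝ = - ⟪R y x z, w⟫_ℝ) ∧
  (∀ x y z w : V, ⟪R x y z, w⟫_ℝ + ⟪R y z x, w⟫_ℝ + ⟪R z x y, w⟫_ℝ = 0)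

/-- The Jacobi operator `J(x) : y ↦ R(y,x)x`. -/
def Jacobi (R : V →ₗ[ℝ] V →ₗ[ℝ] V →ₗ[ℝ] V) (x : V) : V →ₗ[ℝ] V where
  toFun y := R y x x
  map_add' a b := by simp
  map_smul' c a := by simp

/-- The polarized Jacobi operator `J(x,y) : z ↦ ½R(z,x)y + ½R(z,y)x`. -/
def JacobiP (R : V →ₗ[ℝ] V →ₗ[ℝ] V →ₗ[ℝ] V) (x y : V) : V →ₗ[ℝ] V where
  toFun z := (1/2 : ℝ) • R z x y + (1/2 : ℝ) • R z y x
  map_add' a b := by simp; module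
  map_smul' c a := by simp; module

/-- `R` is Jacobi-Tsankov: Jacobi operators of orthogonal vectors commute. -/
def JacobiTsankov (R : V →ₗ[ℝ] V →ₗ[ℝ] V →ₗ[ℝ] V) : Prop :=
  ∀ x y : V, ⟪x, y⟫_ℝ = 0 → Jacobi R x ∘ₗ Jacobi R y = Jacobi R y ∘ₗ Jacobi R x

/-! ### Symmetries of Jacobi operators -/

section Symmetries

variable {R : V →ₗ[ℝ] V →ₗ[ℝ] V →ₗ[ℝ] V}

lemma jacobi_apply (x y : V) : Jacobi R x y = R y x x := rfl

lemma jacobiP_apply (x y z : V) :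
    JacobiP R x y z = (1/2 : ℝ) • R z x y + (1/2 : ℝ) • R z y x := rfl

lemma curv_antisymm (hR : IsCurvatureOperator R) (x y z : V) : R x y z = - R y x z := by
  refine ext_inner_right ℝ fun w => ?_
  rw [inner_neg_left]
  exact hR.2.1 x y z w

lemma curv_self (hR : IsCurvatureOperator R) (x z : V) : R x x z = 0 := by
  have h := curv_antisymm hR x x z
  have h2 : (2 : ℝ) • R x x z = 0 := by rw [two_smul]; nth_rw 1 [h]; exact neg_add_cancel _
  exact (smul_eq_zero.mp h2).resolve_left two_ne_zero

lemma curv_antisymm_last (hR : IsCurvatureOperator R) (x y z w : V) :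
    ⟪R x y z, w⟫_ℝ = - ⟪R x y w, z⟫_ℝ := by
  rw [hR.1 x y z w, hR.2.1, hR.1 w z x y]

lemma jacobi_self (hR : IsCurvatureOperator R) (x : V) : Jacobi R x x = 0 := curv_self hR x x

lemma jacobiP_comm (x y : V) : JacobiP R x y = JacobiP R y x := by
  ext z
  simp only [jacobiP_apply]
  abel

/-- Pair symmetry composed with antisymmetry in both pairs. -/
lemma curv_flip (hR : IsCurvatureOperator R) (x y v w : V) :
    ⟪R v x y, w⟫_ℝ = ⟪R w y x, v⟫_ℝ := by
  rw [hR.1 v x y w, hR.2.1, curv_antisymm_last hR, neg_neg]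

lemma jacobiP_symm (hR : IsCurvatureOperator R) (x y v w : V) :
    ⟪JacobiP R x y v, w⟫_ℝ = ⟪v, JacobiP R x y w⟫_ℝ := by
  rw [real_inner_comm _ v]
  simp only [jacobiP_apply, inner_add_left, real_inner_smul_left]
  rw [curv_flip hR x y v w, curv_flip hR y x v w]
  ring

lemma jacobi_symm (hR : IsCurvatureOperator R) (x v w : V) :
    ⟪Jacobi R x v, w⟫_ℝ = ⟪v, Jacobi R x w⟫_ℝ := by
  rw [real_inner_comm _ v]
  exact curv_flip hR x x v w

/-- The sectional curvature numerator is symmetric in its two vectors. -/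
lemma jacobi_quad_comm (hR : IsCurvatureOperator R) (x y : V) :
    ⟪Jacobi R x y, y⟫_ℝ = ⟪Jacobi R y x, x⟫_ℝ := by
  simp only [jacobi_apply]
  rw [hR.2.1 y x x y, curv_antisymm_last hR, neg_neg]

lemma jacobi_inner_self (hR : IsCurvatureOperator R) (x v : V) : ⟪Jacobi R x v, x⟫_ℝ = 0 := by
  rw [jacobi_symm hR, jacobi_self hR, inner_zero_right]

lemma jacobiP_left (hR : IsCurvatureOperator R) (x y : V) :
    JacobiP R x y x = -(1/2 : ℝ) • Jacobi R x y := by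
  simp only [jacobiP_apply, jacobi_apply]
  rw [curv_self hR, curv_antisymm hR x y x]
  module

lemma jacobiP_right (hR : IsCurvatureOperator R) (x y : V) :
    JacobiP R x y y = -(1/2 : ℝ) • Jacobi R y x := by
  rw [jacobiP_comm, jacobiP_left hR]

lemma jacobi_comb (s t : ℝ) (x y v : V) :
    Jacobi R (s • x + t • y) v
      = s ^ 2 • Jacobi R x v + (2 * s * t) • JacobiP R x y v + t ^ 2 • Jacobi R y v := by
  simp only [jacobi_apply, jacobiP_apply, map_add, map_smul, LinearMap.add_apply,
    LinearMap.smul_apply]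
  module

end Symmetries

/-! ### Consequences of commutation -/

section Tsankov

variable {R : V →ₗ[ℝ] V →ₗ[ℝ] V →ₗ[ℝ] V}

lemma jacobi_commute (hT : JacobiTsankov R) {x y : V} (h : ⟪x, y⟫_ℝ = 0) (v : V) :
    Jacobi R x (Jacobi R y v) = Jacobi R y (Jacobi R x v) :=
  LinearMap.congr_fun (hT x y h) v

/-- Rescaling to equal lengths, this is the commutation of `J(x + y)` and `J(x - y)`. -/
lemma jacobiP_commute (hT : JacobiTsankov R) {x y : V} (h : ⟪x, y⟫_ℝ = 0)
    (hx : x ≠ 0) (hy : y ≠ 0) (v : V) :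
    JacobiP R x y (‖y‖ ^ 2 • Jacobi R x v + ‖x‖ ^ 2 • Jacobi R y v)
      = ‖y‖ ^ 2 • Jacobi R x (JacobiP R x y v) + ‖x‖ ^ 2 • Jacobi R y (JacobiP R x y v) := by
  have horth : ⟪‖y‖ • x + ‖x‖ • y, ‖y‖ • x + (-‖x‖) • y⟫_ℝ = 0 := by
    simp only [inner_add_left, inner_add_right, real_inner_smul_left, real_inner_smul_right, h,
      real_inner_comm x y]
    rw [real_inner_self_eq_norm_sq, real_inner_self_eq_norm_sq]
    ring
  have h1 := jacobi_commute hT horth v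
  have h2 := jacobi_commute hT h v
  simp only [jacobi_comb, map_add, map_smul, h2] at h1
  have hne : (4 * (‖y‖ * ‖x‖)) ≠ 0 := by
    have := norm_pos_iff.mpr hx
    have := norm_pos_iff.mpr hy
    positivity
  rw [map_add, map_smul, map_smul]
  refine smul_right_injective V hne ?_
  simp only
  rw [← sub_eq_zero] at h1 ⊢
  rw [← h1]
  module

/-- Obtained by evaluating `jacobiP_commute` at `x` and pairing with `y`. -/
lemma norm_duality (hR : IsCurvatureOperator R) (hT : JacobiTsankov R) {x y : V}
    (h : ⟪x, y⟫_ℝ = 0) :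
    ‖x‖ ^ 2 * ‖Jacobi R y x‖ ^ 2 = ‖y‖ ^ 2 * ‖Jacobi R x y‖ ^ 2 := by
  rcases eq_or_ne x 0 with rfl | hx
  · simp [jacobi_apply]
  rcases eq_or_ne y 0 with rfl | hy
  · simp [jacobi_apply]
  have h1 := congrArg (fun u => ⟪u, y⟫_ℝ) (jacobiP_commute hT h hx hy x)
  simp only [jacobi_self hR, jacobiP_left hR, inner_add_left, real_inner_smul_left, map_smul,
    smul_zero, zero_add] at h1
  rw [jacobiP_symm hR, jacobiP_right hR, real_inner_smul_right, real_inner_self_eq_norm_sq,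
    jacobi_symm hR x, jacobi_symm hR y _ y, jacobi_self hR, inner_zero_right,
    real_inner_self_eq_norm_sq] at h1
  linarith

lemma eigen_duality (hR : IsCurvatureOperator R) (hT : JacobiTsankov R) {x y : V}
    (h : ⟪x, y⟫_ℝ = 0) {μ : ℝ} (hμ : Jacobi R x y = μ • y) :
    ‖x‖ ^ 2 • Jacobi R y x = (μ * ‖y‖ ^ 2) • x := by
  have h1 := norm_duality hR hT h
  have h2 := jacobi_quad_comm hR x y
  rw [hμ, norm_smul, Real.norm_eq_abs, mul_pow, sq_abs] at h1
  rw [hμ, real_inner_smul_left, real_inner_self_eq_norm_sq] at h2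
  -- the case of equality in the Cauchy-Schwarz inequality for `J(y)x` and `x`
  rw [← sub_eq_zero, ← norm_eq_zero, ← sq_eq_zero_iff, norm_sub_sq_real, norm_smul, norm_smul,
    real_inner_smul_left, real_inner_smul_right, ← h2, mul_pow, mul_pow, norm_pow, norm_norm,
    Real.norm_eq_abs, sq_abs]
  linear_combination ‖x‖ ^ 2 * h1

/-- Both `J(y)` and `J(y + z)` commute with `J(x)`, so `J(y)z` lies in the `ν`-eigenspace of `J(x)`
and, being `-2 J(y,z)y`, also in the `μ`-eigenspace. -/
lemma separation (hR : IsCurvatureOperator R) (hT : JacobiTsankov R) {x y z : V} {μ ν : ℝ}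
    (hne : μ ≠ ν) (hxy : ⟪x, y⟫_ℝ = 0) (hxz : ⟪x, z⟫_ℝ = 0)
    (hy : Jacobi R x y = μ • y) (hz : Jacobi R x z = ν • z) : Jacobi R y z = 0 := by
  have hν : Jacobi R x (Jacobi R y z) = ν • Jacobi R y z := by
    rw [jacobi_commute hT hxy, hz, map_smul]
  have hμ : Jacobi R x (Jacobi R y z) = μ • Jacobi R y z := by
    have horth : ⟪x, (1 : ℝ) • y + (1 : ℝ) • z⟫_ℝ = 0 := by simp [inner_add_right, hxy, hxz]
    have h1 := jacobi_commute hT horth y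
    have h2 := jacobi_commute hT hxz y
    simp only [jacobi_comb, map_add, map_smul, hy, h2, jacobi_self hR, jacobiP_left hR] at h1
    simp only [map_zero] at h1
    linear_combination (norm := module) (-1 : ℝ) • h1
  have h3 : (μ - ν) • Jacobi R y z = 0 := by rw [sub_smul, ← hμ, ← hν, sub_self]
  exact (smul_eq_zero.mp h3).resolve_left (sub_ne_zero.mpr hne)

lemma eigenvector_orthogonal (hR : IsCurvatureOperator R) {x y : V} {μ : ℝ} (hμ : μ ≠ 0)
    (hy : Jacobi R x y = μ • y) : ⟪x, y⟫_ℝ = 0 := by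
  have h := jacobi_inner_self hR x y
  rw [hy, real_inner_smul_left, real_inner_comm] at h
  exact (mul_eq_zero.mp h).resolve_left hμ

lemma eigenvectors_orthogonal (hR : IsCurvatureOperator R) {x y z : V} {μ ν : ℝ} (hne : μ ≠ ν)
    (hy : Jacobi R x y = μ • y) (hz : Jacobi R x z = ν • z) : ⟪y, z⟫_ℝ = 0 := by
  have h := jacobi_symm hR x y z
  rw [hy, hz, real_inner_smul_left, real_inner_smul_right] at h
  have : (μ - ν) * ⟪y, z⟫_ℝ = 0 := by linarith
  exact (mul_eq_zero.mp this).resolve_left (sub_ne_zero.mpr hne)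

/-- For `μ ≠ ν`, separation and duality would make `x` and `z` eigenvectors of `J(y)` for a nonzero
eigenvalue and for `0`; separation for `J(y)` then gives `J(x)z = 0`. -/
lemma nonzero_eigenvalue_unique (hR : IsCurvatureOperator R) (hT : JacobiTsankov R) {x y z : V}
    {μ ν : ℝ} (hy0 : y ≠ 0) (hz0 : z ≠ 0) (hμ : μ ≠ 0) (hν : ν ≠ 0)
    (hy : Jacobi R x y = μ • y) (hz : Jacobi R x z = ν • z) : μ = ν := by
  by_contra hne
  have hxy := eigenvector_orthogonal hR hμ hy
  have hxz := eigenvector_orthogonal hR hν hz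
  have hx0 : x ≠ 0 := by
    rintro rfl
    have : μ • y = 0 := by rw [← hy]; simp [jacobi_apply]
    exact (smul_ne_zero hμ hy0) this
  have hyz := separation hR hT hne hxy hxz hy hz
  have hnx : ‖x‖ ^ 2 ≠ 0 := by simpa using hx0
  have hny : ‖y‖ ^ 2 ≠ 0 := by simpa using hy0
  have hyx : Jacobi R y x = (μ * ‖y‖ ^ 2 / ‖x‖ ^ 2) • x := by
    refine smul_right_injective V hnx ?_
    simp only
    rw [eigen_duality hR hT hxy hy, smul_smul]
    congr 1
    field_simp
  -- separation once more, now for `J(y)`, with eigenvectors `x` and `z`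
  have h0 := separation hR hT (x := y) (y := x) (z := z) (ν := 0)
    (div_ne_zero (mul_ne_zero hμ hny) hnx) (by rw [real_inner_comm]; exact hxy)
    (eigenvectors_orthogonal hR hne hy hz) hyx (by rw [hyz, zero_smul])
  rw [hz] at h0
  exact (smul_ne_zero hν hz0) h0

/-- Each `J(x)` is diagonalizable with at most one nonzero eigenvalue. -/
lemma jacobi_sq [FiniteDimensional ℝ V] (hR : IsCurvatureOperator R) (hT : JacobiTsankov R)
    (x : V) : ∃ μ : ℝ, ∀ v, Jacobi R x (Jacobi R x v) = μ • Jacobi R x v := by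
  have hs : (Jacobi R x).IsSymmetric := fun v w => jacobi_symm hR x v w
  let e := hs.eigenvectorBasis rfl
  have he : ∀ i, Jacobi R x (e i) = hs.eigenvalues rfl i • e i :=
    fun i => hs.apply_eigenvectorBasis rfl i
  have he0 : ∀ i, e i ≠ 0 := fun i => e.orthonormal.ne_zero i
  obtain ⟨μ, hμ⟩ : ∃ μ : ℝ, ∀ i, hs.eigenvalues rfl i = 0 ∨ hs.eigenvalues rfl i = μ := by
    by_cases h : ∃ j, hs.eigenvalues rfl j ≠ 0
    · obtain ⟨j, hj⟩ := h
      refine ⟨hs.eigenvalues rfl j, fun i => or_iff_not_imp_left.mpr fun hi => ?_⟩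
      exact nonzero_eigenvalue_unique hR hT (he0 i) (he0 j) hi hj (he i) (he j)
    · push Not at h
      exact ⟨0, fun i => Or.inl (h i)⟩
  refine ⟨μ, fun v => ?_⟩
  have : Jacobi R x ∘ₗ Jacobi R x = μ • Jacobi R x := by
    refine e.toBasis.ext fun i => ?_
    simp only [OrthonormalBasis.coe_toBasis, LinearMap.comp_apply, LinearMap.smul_apply, he,
      map_smul]
    rcases hμ i with h | h <;> simp [h]
  exact LinearMap.congr_fun this v

lemma jacobi_sq_eq_zero (hR : IsCurvatureOperator R) {x v : V}
    (h : Jacobi R x (Jacobi R x v) = 0) : Jacobi R x v = 0 := by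
  rw [← inner_self_eq_zero (𝕜 := ℝ), jacobi_symm hR, h, inner_zero_right]

lemma jacobiP_sq_eq_zero (hR : IsCurvatureOperator R) {x y v : V}
    (h : JacobiP R x y (JacobiP R x y v) = 0) : JacobiP R x y v = 0 := by
  rw [← inner_self_eq_zero (𝕜 := ℝ), jacobiP_symm hR, h, inner_zero_right]

lemma jacobi_eq_zero_comm (hR : IsCurvatureOperator R) (hT : JacobiTsankov R) {x y : V}
    (hx : ‖x‖ = 1) (hxy : ⟪x, y⟫_ℝ = 0) (h0 : Jacobi R x y = 0) : Jacobi R y x = 0 := by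
  have h := norm_duality hR hT hxy
  rw [h0, hx] at h
  simpa using h

/-! ### The relations between `J(x)`, `J(y)` and `J(x,y)` -/

/-- The multiplication table of `J(x)`, `J(y)`, `J(x,y)` when `J(x)y = 0`;
`μ` is the common nonzero eigenvalue of `J(x)` and `J(y)`, and is arbitrary if these vanish. -/
def Relations (R : V →ₗ[ℝ] V →ₗ[ℝ] V →ₗ[ℝ] V) (x y : V) (μ : ℝ) : Prop :=
  (∀ v, Jacobi R y (Jacobi R x v) = 0) ∧
  (∀ v, Jacobi R x (Jacobi R x v) = μ • Jacobi R x v) ∧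
  (∀ v, Jacobi R y (Jacobi R y v) = μ • Jacobi R y v) ∧
  (∀ v, Jacobi R x (JacobiP R x y v) + JacobiP R x y (Jacobi R x v) = μ • JacobiP R x y v) ∧
  (∀ v, Jacobi R y (JacobiP R x y v) + JacobiP R x y (Jacobi R y v) = μ • JacobiP R x y v) ∧
  (∀ v, (4 : ℝ) • JacobiP R x y (JacobiP R x y v) = μ • (Jacobi R x v + Jacobi R y v))

lemma relations_of_ne_zero [FiniteDimensional ℝ V] (hR : IsCurvatureOperator R)
    (hT : JacobiTsankov R) {x y : V} (hx : ‖x‖ = 1) (hy : ‖y‖ = 1) (hxy : ⟪x, y⟫_ℝ = 0)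
    (h0 : Jacobi R x y = 0) {v₀ : V} (hv₀ : Jacobi R x v₀ ≠ 0) :
    ∃ μ : ℝ, μ ≠ 0 ∧ Relations R x y μ := by
  obtain ⟨μ, hμ⟩ := jacobi_sq hR hT x
  have hμ0 : μ ≠ 0 := by
    rintro rfl
    exact hv₀ (jacobi_sq_eq_zero hR (by rw [hμ, zero_smul]))
  have hxa : ∀ v, ⟪x, Jacobi R x v⟫_ℝ = 0 := fun v => by
    rw [real_inner_comm]; exact jacobi_inner_self hR x v
  have h0' : Jacobi R x y = (0 : ℝ) • y := by rw [h0, zero_smul]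
  have hba : ∀ v, Jacobi R y (Jacobi R x v) = 0 := fun v =>
    separation hR hT hμ0.symm hxy (hxa v) h0' (hμ v)
  have hab : ∀ v, Jacobi R x (Jacobi R y v) = 0 := fun v => by
    rw [jacobi_commute hT hxy, hba]
  set w := Jacobi R x v₀ with hw
  have hnw : ‖w‖ ^ 2 ≠ 0 := by simpa using hv₀
  have hwx : Jacobi R w x = (μ * ‖w‖ ^ 2) • x := by
    have := eigen_duality hR hT (hxa v₀) (hμ v₀)
    simpa [hx] using this
  have hwy : Jacobi R w y = 0 := separation hR hT hμ0 (hxa v₀) hxy (hμ v₀) h0'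
  have hyw : ⟪y, w⟫_ℝ = 0 := eigenvectors_orthogonal hR hμ0.symm h0' (hμ v₀)
  have key : ∀ s : ℝ, ∀ v, Jacobi R ((1 : ℝ) • x + s • y) (Jacobi R ((1 : ℝ) • x + s • y) v)
      = (μ * (1 + s ^ 2)) • Jacobi R ((1 : ℝ) • x + s • y) v := by
    intro s
    obtain ⟨ν, hν⟩ := jacobi_sq hR hT ((1 : ℝ) • x + s • y)
    set u := (1 : ℝ) • x + s • y with hu
    have huw : ⟪u, w⟫_ℝ = 0 := by
      rw [hu, inner_add_left, real_inner_smul_left, real_inner_smul_left, hyw, hxa v₀]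
      ring
    have hnu : ‖u‖ ^ 2 = 1 + s ^ 2 := by
      rw [← real_inner_self_eq_norm_sq]
      simp only [hu, inner_add_left, inner_add_right, real_inner_smul_left, real_inner_smul_right,
        hxy, real_inner_comm x y]
      rw [real_inner_self_eq_norm_sq, real_inner_self_eq_norm_sq, hx, hy]
      ring
    have hwu : Jacobi R w u = (μ * ‖w‖ ^ 2) • x := by
      simp [hu, hwx, hwy]
    -- `ν` is read off from `‖J(u)w‖² = ν ⟪J(u)w, w⟫`, both sides being known by duality
    have e1 := norm_duality hR hT huw
    have e2 := jacobi_quad_comm hR u w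
    have e3 : ‖Jacobi R u w‖ ^ 2 = ν * ⟪Jacobi R u w, w⟫_ℝ := by
      rw [← real_inner_self_eq_norm_sq, jacobi_symm hR, hν, real_inner_smul_right,
        real_inner_comm]
    have e4 : ⟪x, u⟫_ℝ = 1 := by
      simp [hu, inner_add_right, real_inner_smul_right, hxy, hx]
    rw [hwu, real_inner_smul_left, e4] at e2
    rw [hwu, norm_smul, Real.norm_eq_abs, mul_pow, sq_abs, hx, hnu, e3, e2] at e1
    have e5 : ν = μ * (1 + s ^ 2) := by
      have hk : μ * (‖w‖ ^ 2) ^ 2 ≠ 0 := mul_ne_zero hμ0 (pow_ne_zero _ hnw)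
      refine mul_left_cancel₀ hk ?_
      linear_combination -e1
    rw [← e5]
    exact hν
  have key' : ∀ s : ℝ, ∀ v,
      (2 * s) • (Jacobi R x (JacobiP R x y v) + JacobiP R x y (Jacobi R x v)
          - μ • JacobiP R x y v)
      + s ^ 2 • ((4 : ℝ) • JacobiP R x y (JacobiP R x y v)
          - μ • (Jacobi R x v + Jacobi R y v))
      + (2 * s ^ 3) • (Jacobi R y (JacobiP R x y v) + JacobiP R x y (Jacobi R y v)
          - μ • JacobiP R x y v)
      + s ^ 4 • (Jacobi R y (Jacobi R y v) - μ • Jacobi R y v) = 0 := by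
    intro s v
    have h := key s v
    simp only [jacobi_comb, map_add, map_smul, hab, hba, hμ] at h
    rw [← sub_eq_zero] at h
    rw [← h]
    module
  -- a polynomial of degree four without constant term vanishing at `±1, ±2` is zero
  refine ⟨μ, hμ0, hba, hμ, fun v => ?_, fun v => ?_, fun v => ?_, fun v => ?_⟩ <;>
    have h1 := key' 1 v <;> have h2 := key' (-1) v <;> have h3 := key' 2 v <;>
    have h4 := key' (-2) v
  · linear_combination (norm := module) (1/24 : ℝ) • h3 + (1/24 : ℝ) • h4 - (1/6 : ℝ) • h1
      - (1/6 : ℝ) • h2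
  · linear_combination (norm := module) (1/3 : ℝ) • h1 - (1/3 : ℝ) • h2 - (1/24 : ℝ) • h3
      + (1/24 : ℝ) • h4
  · linear_combination (norm := module) (1/24 : ℝ) • h3 - (1/24 : ℝ) • h4 - (1/12 : ℝ) • h1
      + (1/12 : ℝ) • h2
  · linear_combination (norm := module) (2/3 : ℝ) • h1 + (2/3 : ℝ) • h2 - (1/24 : ℝ) • h3
      - (1/24 : ℝ) • h4

/-- If `J(x) = 0`, exchanging `x` and `y` shows `J(y) = 0`, and then separation for `J(x + y)`
shows `J(x,y) = 0`, so that the relations are trivial. -/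
lemma core_relations [FiniteDimensional ℝ V] (hR : IsCurvatureOperator R)
    (hT : JacobiTsankov R) {x y : V} (hx : ‖x‖ = 1) (hy : ‖y‖ = 1) (hxy : ⟪x, y⟫_ℝ = 0)
    (h0 : Jacobi R x y = 0) : ∃ μ : ℝ, μ ≠ 0 ∧ Relations R x y μ := by
  by_cases ha : ∃ v, Jacobi R x v ≠ 0
  · obtain ⟨v, hv⟩ := ha
    exact relations_of_ne_zero hR hT hx hy hxy h0 hv
  push Not at ha
  have hyx : ⟪y, x⟫_ℝ = 0 := by rw [real_inner_comm]; exact hxy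
  have hb : ∀ v, Jacobi R y v = 0 := by
    by_contra! hb
    obtain ⟨v, hv⟩ := hb
    obtain ⟨μ, hμ, -, -, -, -, h5, h6⟩ :=
      relations_of_ne_zero hR hT hy hx hyx (jacobi_eq_zero_comm hR hT hx hxy h0) hv
    have hp : ∀ v, JacobiP R y x v = 0 := fun v => by
      have := h5 v
      rw [ha, ha, map_zero, add_zero] at this
      exact (smul_eq_zero.mp this.symm).resolve_left hμ
    have := h6 v
    rw [hp, ha, smul_zero, add_zero] at this
    exact hv ((smul_eq_zero.mp this.symm).resolve_left hμ)
  -- when `J(x) = J(y) = 0`, one has `J(x ± y) = ± 2 J(x,y)`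
  have hp : ∀ v, JacobiP R x y v = 0 := by
    intro v
    refine jacobiP_sq_eq_zero hR ?_
    obtain ⟨ν, hν⟩ := jacobi_sq hR hT ((1 : ℝ) • x + (1 : ℝ) • y)
    have hplus : ∀ v, Jacobi R ((1 : ℝ) • x + (1 : ℝ) • y) v = (2 : ℝ) • JacobiP R x y v := by
      intro v; rw [jacobi_comb, ha, hb]; module
    have hminus : ∀ v, Jacobi R ((1 : ℝ) • x + (-1 : ℝ) • y) v
        = (-2 : ℝ) • JacobiP R x y v := by
      intro v; rw [jacobi_comb, ha, hb]; module
    have hpx : JacobiP R x y x = 0 := by rw [jacobiP_left hR, ha, smul_zero]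
    have hpy : JacobiP R x y y = 0 := by rw [jacobiP_right hR, hb, smul_zero]
    by_cases hν0 : ν = 0
    · have h := hν v
      rw [hν0, zero_smul, hplus, hplus, map_smul] at h
      simpa using h
    · have hz : Jacobi R ((1 : ℝ) • x + (1 : ℝ) • y) (JacobiP R x y v)
          = ν • JacobiP R x y v := by
        have h := hν v
        rw [hplus v, map_smul] at h
        refine smul_right_injective V (two_ne_zero (α := ℝ)) ?_
        simp only
        rw [h, smul_comm]
      have horth : ⟪(1 : ℝ) • x + (1 : ℝ) • y, (1 : ℝ) • x + (-1 : ℝ) • y⟫_ℝ = 0 := by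
        simp [inner_add_left, inner_add_right, hxy, hyx, hx, hy]
      have h := separation hR hT (Ne.symm hν0) horth (eigenvector_orthogonal hR hν0 hz)
        (by rw [hplus]; simp [hpx, hpy]) hz
      rw [hminus] at h
      simpa using h
  refine ⟨1, one_ne_zero, ?_⟩
  simp [Relations, ha, hb, hp]

end Tsankov

/-! ### The adapted orthonormal basis -/

theorem stmt13 [FiniteDimensional ℝ V] (hm : 3 ≤ Module.finrank ℝ V)
    (R : V →ₗ[ℝ] V →ₗ[ℝ] V →ₗ[ℝ] V) (hR : IsCurvatureOperator R)
    (hT : JacobiTsankov R)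
    (hsmall : ∀ z : V, Module.finrank ℝ (LinearMap.range (Jacobi R z)) <
      Module.finrank ℝ V - 1)
    (x y : V) (hx : ‖x‖ = 1) (hy : ‖y‖ = 1) (hxy : ⟪x, y⟫_ℝ = 0)
    (h0 : Jacobi R x y = 0) :
    ∃ (k : ℕ)
      (b : OrthonormalBasis
        (Fin (Module.finrank ℝ (LinearMap.range (Jacobi R x))) ⊕
          Fin (Module.finrank ℝ (LinearMap.range (Jacobi R x))) ⊕ Fin k) ℝ V)
      (A : Fin (Module.finrank ℝ (LinearMap.range (Jacobi R x))) → ℝ),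
      (∀ i, A i ≠ 0) ∧
      (∀ i, Jacobi R x (b (Sum.inl i)) = A i • b (Sum.inl i)) ∧
      (∀ i, Jacobi R x (b (Sum.inr (Sum.inl i))) = 0) ∧
      (∀ i, Jacobi R x (b (Sum.inr (Sum.inr i))) = 0) ∧
      (∀ i, Jacobi R y (b (Sum.inl i)) = 0) ∧
      (∀ i, Jacobi R y (b (Sum.inr (Sum.inl i))) = A i • b (Sum.inr (Sum.inl i))) ∧
      (∀ i, Jacobi R y (b (Sum.inr (Sum.inr i))) = 0) ∧
      (∀ i, JacobiP R x y (b (Sum.inl i)) = (A i / 2) • b (Sum.inr (Sum.inl i))) ∧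
      (∀ i, JacobiP R x y (b (Sum.inr (Sum.inl i))) = (A i / 2) • b (Sum.inl i)) ∧
      (∀ i, JacobiP R x y (b (Sum.inr (Sum.inr i))) = 0) := by
  obtain ⟨μ, hμ, hba, haa, hbb, hap, hbp, hpp⟩ := core_relations hR hT hx hy hxy h0
  set r := Module.finrank ℝ (LinearMap.range (Jacobi R x)) with hr
  let E := stdOrthonormalBasis ℝ (LinearMap.range (Jacobi R x))
  let e : Fin r → V := fun i => (E i : V)
  let f : Fin r → V := fun i => (2 / μ) • JacobiP R x y (e i)
  have hae : ∀ i, Jacobi R x (e i) = μ • e i := fun i => by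
    obtain ⟨v, hv⟩ := (E i).2
    change Jacobi R x (E i : V) = μ • (E i : V)
    rw [← hv, haa]
  have hbe : ∀ i, Jacobi R y (e i) = 0 := fun i => by
    obtain ⟨v, hv⟩ := (E i).2
    change Jacobi R y (E i : V) = 0
    rw [← hv, hba]
  have hpe : ∀ i, JacobiP R x y (e i) = (μ / 2) • f i := fun i => by
    simp only [f, smul_smul]
    rw [div_mul_div_comm, mul_comm μ 2, div_self (mul_ne_zero two_ne_zero hμ), one_smul]
  have hppe : ∀ i, JacobiP R x y (JacobiP R x y (e i)) = (μ ^ 2 / 4) • e i := fun i => by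
    have h := hpp (e i)
    rw [hae, hbe, add_zero] at h
    linear_combination (norm := module) (1/4 : ℝ) • h
  have haf : ∀ i, Jacobi R x (f i) = 0 := fun i => by
    have h := hap (e i)
    rw [hae, map_smul] at h
    simp only [f, map_smul]
    rw [add_eq_right.mp h, smul_zero]
  have hbf : ∀ i, Jacobi R y (f i) = μ • f i := fun i => by
    have h := hbp (e i)
    rw [hbe, map_zero, add_zero] at h
    simp only [f, map_smul]
    rw [h, smul_comm]
  have hpf : ∀ i, JacobiP R x y (f i) = (μ / 2) • e i := fun i => by
    simp only [f, map_smul]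
    rw [hppe, smul_smul]
    congr 1
    field_simp
    norm_num
  have hee : ∀ i j, ⟪e i, e j⟫_ℝ = if i = j then 1 else 0 := fun i j =>
    orthonormal_iff_ite.mp E.orthonormal i j
  have hff : ∀ i j, ⟪f i, f j⟫_ℝ = if i = j then 1 else 0 := fun i j => by
    have h1 : ⟪f i, f j⟫_ℝ = (2 / μ) * ⟪JacobiP R x y (f i), e j⟫_ℝ := by
      rw [jacobiP_symm hR, ← real_inner_smul_right]
    rw [h1, hpf, real_inner_smul_left, hee, ← mul_assoc, div_mul_div_comm, mul_comm 2 μ,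
      div_self (mul_ne_zero hμ two_ne_zero), one_mul]
  have hef : ∀ i j, ⟪e i, f j⟫_ℝ = 0 := fun i j =>
    eigenvectors_orthogonal hR hμ (hae i) (by rw [haf, zero_smul])
  have hfe : ∀ i j, ⟪f i, e j⟫_ℝ = 0 := fun i j => by rw [real_inner_comm]; exact hef j i
  have hon : Orthonormal ℝ (Sum.elim e f) := by
    rw [orthonormal_iff_ite]
    rintro (i | i) (j | j) <;> simp [hee, hff, hef, hfe]
  have hcard : r + r ≤ Module.finrank ℝ V := by
    simpa using hon.linearIndependent.fintype_card_le_finrank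
  let k := Module.finrank ℝ V - (r + r)
  let g : Fin r ⊕ Fin r ⊕ Fin k → V := Sum.elim e (Sum.elim f 0)
  -- the zero entries of `g` are placeholders outside `S`, to be replaced by the completion
  let S : Set (Fin r ⊕ Fin r ⊕ Fin k) := {i | ∀ l, i ≠ Sum.inr (Sum.inr l)}
  have hS : Orthonormal ℝ (S.domRestrict g) := by
    rw [orthonormal_iff_ite]
    rintro ⟨i | i | i, hi⟩ ⟨j | j | j, hj⟩ <;>
      first
        | exact absurd rfl (hi _)
        | exact absurd rfl (hj _)
        | simp [g, Set.domRestrict, hee, hff, hef, hfe]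
  obtain ⟨b, hb⟩ := hS.exists_orthonormalBasis_extension_of_card_eq
    (by simp only [Fintype.card_sum, Fintype.card_fin, k]; omega)
  have hb1 : ∀ i, b (Sum.inl i) = e i := fun i => hb _ (by simp [S])
  have hb2 : ∀ i, b (Sum.inr (Sum.inl i)) = f i := fun i => hb _ (by simp [S])
  have hwe : ∀ l v, ⟪b (Sum.inr (Sum.inr l)), Jacobi R x v⟫_ℝ = 0 := by
    intro l v
    have h : (⟨Jacobi R x v, v, rfl⟩ : LinearMap.range (Jacobi R x))
        = ∑ i, E.repr ⟨Jacobi R x v, v, rfl⟩ i • E i := (E.sum_repr _).symm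
    have h' := congrArg (Subtype.val) h
    simp only [Submodule.coe_sum, Submodule.coe_smul] at h'
    rw [h', inner_sum]
    refine Finset.sum_eq_zero fun i _ => ?_
    rw [real_inner_smul_right]
    change _ * ⟪_, e i⟫_ℝ = 0
    rw [← hb1, b.orthonormal.2 (by simp), mul_zero]
  have hwp : ∀ l v, ⟪b (Sum.inr (Sum.inr l)), JacobiP R x y (Jacobi R x v)⟫_ℝ = 0 := by
    intro l v
    have h : (⟨Jacobi R x v, v, rfl⟩ : LinearMap.range (Jacobi R x))
        = ∑ i, E.repr ⟨Jacobi R x v, v, rfl⟩ i • E i := (E.sum_repr _).symm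
    have h' := congrArg (Subtype.val) h
    simp only [Submodule.coe_sum, Submodule.coe_smul] at h'
    rw [h', map_sum, inner_sum]
    refine Finset.sum_eq_zero fun i _ => ?_
    rw [map_smul, real_inner_smul_right]
    change _ * ⟪_, JacobiP R x y (e i)⟫_ℝ = 0
    rw [hpe, real_inner_smul_right, ← hb2, b.orthonormal.2 (by simp), mul_zero, mul_zero]
  -- the remaining basis vectors are orthogonal to the ranges of `J(x)` and `J(x,y) J(x)`, hence
  -- killed by `J(x)` and by `J(x) J(x,y)`
  have haw : ∀ l, Jacobi R x (b (Sum.inr (Sum.inr l))) = 0 := fun l =>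
    ext_inner_right ℝ fun v => by rw [jacobi_symm hR, hwe, inner_zero_left]
  have hpw : ∀ l, JacobiP R x y (b (Sum.inr (Sum.inr l))) = 0 := fun l => by
    have h := hap (b (Sum.inr (Sum.inr l)))
    have h1 : Jacobi R x (JacobiP R x y (b (Sum.inr (Sum.inr l)))) = 0 :=
      ext_inner_right ℝ fun v => by rw [jacobi_symm hR, jacobiP_symm hR, hwp, inner_zero_left]
    rw [h1, haw, map_zero, add_zero] at h
    exact (smul_eq_zero.mp h.symm).resolve_left hμ
  have hbw : ∀ l, Jacobi R y (b (Sum.inr (Sum.inr l))) = 0 := fun l => by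
    have h := hpp (b (Sum.inr (Sum.inr l)))
    rw [hpw, map_zero, smul_zero, haw, zero_add] at h
    exact (smul_eq_zero.mp h.symm).resolve_left hμ
  refine ⟨k, b, fun _ => μ, fun _ => hμ, ?_, ?_, haw, ?_, ?_, hbw, ?_, ?_, hpw⟩ <;> intro i <;>
    simp only [hb1, hb2]
  · exact hae i
  · exact haf i
  · exact hbe i
  · exact hbf i
  · exact hpe i
  · exact hpf i
end
end

section
/- If R is a Jacobi-Tsankov algebraic curvature tensor on V of dimension m ≥ 3, then either R = c·R₀ for some c ∈ ℝ, or R = c·R_Θ for some c ∈ ℝ and some Hermitian almost complex structure Θ on V. -/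
/-!
Write `J(x)` for the Jacobi operator of `R`, `J(a, b)` for its polarization, and `⟨·, ·⟩` for the
inner product.  The form `⟨J(a, b)c, d⟩` has the symmetries collected in `IsJacobiSystem`, and it
determines `R` (`curvature_eq`), so it is enough to find the biquadratic form `⟨J(v)y, y⟩`.

If all Jacobi operators vanish then `R = 0`.  Otherwise fix unit vectors `x`, `w` with
`J(x)w = l w`, `l ≠ 0`.  Since `J(x)J(y)x = J(y)J(x)x = 0` for `y ⊥ x`, polarization in `y` gives
`J(x, w) = -(l/2) (x ⊗ w + w ⊗ x)` (`form_range`, `IsEigenPair.mixed`).  Any `J(u)` with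
`u ⊥ x, w` commutes with this operator, so it is a scalar on the plane of `x` and `w`; read through
the pair symmetry, this says that `J(w)` and `J(x)` agree on the complement of that plane
(`IsEigenPair.jacobi_w`).  A further commutator gives `J(x)² = l J(x)` (`IsEigenPair.sq`), so `l` is
the only nonzero eigenvalue of `J(x)`.

If `J(x)` is injective on the complement of `x`, it equals `l` there, and the same holds for every
unit vector, which is constant curvature `l` (`full_rank_case`).

If instead `J(x)z = 0` for some nonzero `z ⊥ x`, a second eigenvector `u` for `l` would force
`J(x, z)w = 0`, which is impossible, so `J(x)` has rank one (`no_two`, `rank_one`).  For every unit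
`z ⊥ x, w` the vector `m = J(x, z)w` is nonzero and `J(z)m = l m`.  Then `J(z)` has rank one too, and
the fact that `J(x + z)` has a single nonzero eigenvalue gives `|m|² = l² / 4` (`unit_case`).  Hence
`Θ z = (2 / l) J(x, z)w`, together with `Θ x = w` and `Θ w = -x`, is a skew isometry with
`⟨J(v)y, y⟩ = l ⟨Θ v, y⟩²` (`rank_one_case`), and `R = (l / 3) R_Θ`.  The argument builds `Θ`
directly instead of quoting the classification of rank-one Osserman tensors.
-/

open scoped InnerProductSpace
noncomputable section

variable {V : Type*} [NormedAddCommGroup V] [InnerProductSpace ℝ V]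

/-! ### Symmetric operators -/

/-- The symmetrized rank-one operator `y ↦ ⟨a, y⟩ b + ⟨b, y⟩ a`. -/
def symProd (a b : V) : V →ₗ[ℝ] V where
  toFun y := ⟪a, y⟫_ℝ • b + ⟪b, y⟫_ℝ • a
  map_add' x y := by simp only [inner_add_right]; module
  map_smul' c x := by simp only [inner_smul_right, RingHom.id_apply]; module

lemma symProd_apply (a b y : V) : symProd a b y = ⟪a, y⟫_ℝ • b + ⟪b, y⟫_ℝ • a := rfl

lemma isSymmetric_symProd (a b : V) : (symProd a b).IsSymmetric := fun x y => by
  simp only [symProd_apply, inner_add_left, inner_add_right, inner_smul_left, inner_smul_right,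
    RCLike.conj_to_real, real_inner_comm x a, real_inner_comm x b]
  ring

lemma eq_of_quadratic {f g : V →ₗ[ℝ] V} (hf : f.IsSymmetric) (hg : g.IsSymmetric)
    (hfg : ∀ v, ⟪f v, v⟫_ℝ = ⟪g v, v⟫_ℝ) : f = g := by
  rw [← sub_eq_zero, ← (hf.sub hg).inner_map_self_eq_zero]
  intro v
  rw [LinearMap.sub_apply, inner_sub_left, hfg, sub_self]

/-! ### Consequences of the commutation relations -/

/-- The commutation and symmetry properties of the polarized Jacobi operators `J a b` of a
Jacobi-Tsankov curvature tensor.  The associated quadratic operators are `J a a`. -/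
structure IsJacobiSystem (J : V →ₗ[ℝ] V →ₗ[ℝ] V →ₗ[ℝ] V) : Prop where
  symm : ∀ a b, J a b = J b a
  selfAdj : ∀ a b c d, ⟪J a b c, d⟫_ℝ = ⟪c, J a b d⟫_ℝ
  pair : ∀ a b c d, ⟪J a b c, d⟫_ℝ = ⟪J c d a, b⟫_ℝ
  bianchi : ∀ a b c, J a b c + J b c a + J c a b = 0
  comm : ∀ x y, ⟪x, y⟫_ℝ = 0 → ∀ v, J x x (J y y v) = J y y (J x x v)

namespace IsJacobiSystem

variable {J : V →ₗ[ℝ] V →ₗ[ℝ] V →ₗ[ℝ] V} (h : IsJacobiSystem J)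
include h

lemma diag (x : V) : J x x x = 0 := by
  have := h.bianchi x x x
  have h3 : (3 : ℝ) • J x x x = 0 := by rw [← this]; module
  simpa using h3

/-- The Bianchi identity with a repeated vector. -/
lemma apply_left (x y : V) : J x y x = -(1 / 2 : ℝ) • J x x y := by
  have := h.bianchi x y x
  rw [h.symm y x] at this
  have h3 : J x y x = (1 / 2 : ℝ) • (J x y x + J x y x + J x x y) - (1 / 2 : ℝ) • J x x y := by
    module
  rw [h3, this]; module

/-- Polarization of the commutation relation in one of its two vectors. -/
lemma comm_add (x₁ x₂ y : V) (h₁ : ⟪x₁, y⟫_ℝ = 0) (h₂ : ⟪x₂, y⟫_ℝ = 0) (v : V) :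
    J x₁ x₂ (J y y v) = J y y (J x₁ x₂ v) := by
  have e := h.comm (x₁ + x₂) y (by simp [inner_add_left, h₁, h₂]) v
  have e₁ := h.comm x₁ y h₁ v
  have e₂ := h.comm x₂ y h₂ v
  simp only [map_add, LinearMap.add_apply, h.symm x₂ x₁, e₁, e₂] at e
  have h3 : (2 : ℝ) • J x₁ x₂ (J y y v) = (2 : ℝ) • J y y (J x₁ x₂ v) := by
    rw [two_smul, two_smul]
    have := congrArg (fun t => t - J y y (J x₁ x₁ v) - J y y (J x₂ x₂ v)) e
    beta_reduce at this
    calc _ = _ := by abel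
      _ = _ := this
      _ = _ := by abel
  exact smul_right_injective V (two_ne_zero) h3

/-- Commutation of `J(x + w)` with `J(|w|² x - |x|² w)`, expanded. -/
lemma comm_mixed (x w : V) (hxw : ⟪x, w⟫_ℝ = 0) (hx : x ≠ 0) (v : V) :
    ⟪w, w⟫_ℝ • J x x (J x w v) + ⟪x, x⟫_ℝ • J w w (J x w v) =
      ⟪w, w⟫_ℝ • J x w (J x x v) + ⟪x, x⟫_ℝ • J x w (J w w v) := by
  have hwx : ⟪w, x⟫_ℝ = 0 := by rw [real_inner_comm]; exact hxw
  have e := h.comm (x + w) (⟪w, w⟫_ℝ • x - ⟪x, x⟫_ℝ • w)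
    (by simp [inner_add_left, inner_sub_right, inner_smul_right, hxw, hwx, mul_comm]) v
  have e₁ := h.comm x w hxw v
  have ha : 0 < ⟪x, x⟫_ℝ := real_inner_self_pos.2 hx
  have hb : 0 ≤ ⟪w, w⟫_ℝ := real_inner_self_nonneg
  simp only [map_add, map_sub, map_smul, LinearMap.add_apply, LinearMap.sub_apply,
    LinearMap.smul_apply, h.symm w x, smul_add, smul_sub, e₁] at e
  generalize ⟪x, x⟫_ℝ = a at *
  generalize ⟪w, w⟫_ℝ = b at *
  have hab : (2 * (a + b)) ≠ 0 := by positivity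
  rw [← sub_eq_zero] at e ⊢
  have : (2 * (a + b)) • ((b • J x x (J x w v) + a • J w w (J x w v)) -
      (b • J x w (J x x v) + a • J x w (J w w v))) = 0 := by
    rw [← neg_eq_zero, ← e]
    module
  exact (smul_eq_zero.1 this).resolve_left hab

lemma isSymmetric (a b : V) : (J a b).IsSymmetric := fun c d => h.selfAdj a b c d

/-- For `x ⊥ y`, `J(x)J(y)x = J(y)J(x)x = 0`.  Pairing with `v` and polarizing in `y`, the form
`J(x, J(x)v)` vanishes on the complement of `x`, which leaves only the terms below. -/
lemma form_range (x v : V) (hx : x ≠ 0) :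
    J x (J x x v) = -(1 / (2 * ⟪x, x⟫_ℝ)) • symProd x (J x x (J x x v)) := by
  set w := J x x v with hw
  set q := J x x w with hq
  have ha : ⟪x, x⟫_ℝ ≠ 0 := (real_inner_self_pos.2 hx).ne'
  have key : ∀ y, ⟪x, y⟫_ℝ = 0 → ⟪J x w y, y⟫_ℝ = 0 := fun y hy => by
    rw [h.pair, ← h.selfAdj, h.comm x y hy, h.diag]
    simp
  have hqx : ⟪q, x⟫_ℝ = 0 := by rw [hq, h.selfAdj, h.diag, inner_zero_right]
  refine eq_of_quadratic (h.isSymmetric _ _) ((isSymmetric_symProd _ _).smul (by simp)) fun y => ?_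
  have k := key (⟪x, x⟫_ℝ • y - ⟪x, y⟫_ℝ • x) (by
    simp only [inner_sub_right, inner_smul_right]; ring)
  have e1 : ⟪J x w y, x⟫_ℝ = -(1 / 2) * ⟪q, y⟫_ℝ := by
    rw [h.selfAdj, h.apply_left, inner_smul_right, real_inner_comm]
  have e2 : J x w x = -(1 / 2 : ℝ) • q := h.apply_left x w
  simp only [map_sub, map_smul, inner_sub_left, inner_sub_right, inner_smul_left,
    inner_smul_right, e1, e2, hqx, RCLike.conj_to_real] at k
  simp only [LinearMap.smul_apply, symProd_apply, inner_smul_left, inner_add_left,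
    RCLike.conj_to_real]
  field_simp
  refine mul_left_cancel₀ ha ?_
  linear_combination 2 * k

/-- A nonzero eigenvalue of `J(x)` with eigenvector `w` makes `x` an eigenvector of `J(w)`. -/
lemma swap (x w : V) (hx : x ≠ 0) (hw : w ≠ 0) (l : ℝ) (hl : l ≠ 0) (hA : J x x w = l • w) :
    ⟪x, x⟫_ℝ • J w w x = (l * ⟪w, w⟫_ℝ) • x := by
  have ha : ⟪x, x⟫_ℝ ≠ 0 := (real_inner_self_pos.2 hx).ne'
  have hb : ⟪w, w⟫_ℝ ≠ 0 := (real_inner_self_pos.2 hw).ne'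
  have hxw : ⟪x, w⟫_ℝ = 0 := by
    have := h.selfAdj x x x w
    rw [h.diag, hA, inner_smul_right, inner_zero_left] at this
    exact (mul_eq_zero.1 this.symm).resolve_left hl
  have hC : J x w w = -(l * ⟪w, w⟫_ℝ / (2 * ⟪x, x⟫_ℝ)) • x := by
    have := congrArg (fun f => f w) (h.form_range x (l⁻¹ • w) hx)
    have e : J x x (l⁻¹ • w) = w := by rw [map_smul, hA, smul_smul, inv_mul_cancel₀ hl, one_smul]
    simp only [e, hA, LinearMap.smul_apply, symProd_apply, hxw, inner_smul_left,
      RCLike.conj_to_real] at this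
    rw [this, zero_smul, zero_add, smul_smul]
    congr 1; ring
  have e := h.comm_mixed x w hxw hx w
  rw [hC, h.diag, hA] at e
  simp only [map_smul, map_zero, h.diag, hC, smul_zero, zero_add, add_zero, smul_smul] at e
  have e' := congrArg (fun t => (-(2 / (l * ⟪w, w⟫_ℝ)) * ⟪x, x⟫_ℝ) • t) e
  simp only [smul_smul] at e'
  convert e' using 2 <;> field_simp

end IsJacobiSystem

/-- `x` and `w` are unit vectors, and `w` is an eigenvector of `J(x)` for the nonzero
eigenvalue `l`. -/
structure IsEigenPair (J : V →ₗ[ℝ] V →ₗ[ℝ] V →ₗ[ℝ] V) (l : ℝ) (x w : V) : Prop where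
  xx : ⟪x, x⟫_ℝ = 1
  ww : ⟪w, w⟫_ℝ = 1
  l_ne : l ≠ 0
  eig : J x x w = l • w

/-! ### Eigenvectors of a Jacobi operator -/

lemma exists_unit_smul {x : V} (hx : x ≠ 0) :
    ∃ (y : V) (r : ℝ), r ≠ 0 ∧ ⟪y, y⟫_ℝ = 1 ∧ x = r • y := by
  have hx : ‖x‖ ≠ 0 := norm_ne_zero_iff.2 hx
  refine ⟨‖x‖⁻¹ • x, ‖x‖, hx, ?_, by rw [smul_smul, mul_inv_cancel₀ hx, one_smul]⟩
  rw [inner_smul_left, inner_smul_right, real_inner_self_eq_norm_sq, RCLike.conj_to_real]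
  field_simp

lemma IsEigenPair.of_eig {J : V →ₗ[ℝ] V →ₗ[ℝ] V →ₗ[ℝ] V} {l : ℝ} {x u : V} (hx : ⟪x, x⟫_ℝ = 1)
    (hl : l ≠ 0) (hu : u ≠ 0) (hA : J x x u = l • u) : IsEigenPair J l x (‖u‖⁻¹ • u) where
  xx := hx
  ww := by
    have := norm_ne_zero_iff.2 hu
    rw [inner_smul_left, inner_smul_right, real_inner_self_eq_norm_sq, RCLike.conj_to_real]
    field_simp
  l_ne := hl
  eig := by rw [map_smul, hA, smul_comm]

lemma IsJacobiSystem.exists_eigenPair [FiniteDimensional ℝ V]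
    {J : V →ₗ[ℝ] V →ₗ[ℝ] V →ₗ[ℝ] V} (h : IsJacobiSystem J) (x : V) (hx : ⟪x, x⟫_ℝ = 1)
    (hJ : J x x ≠ 0) : ∃ l w, IsEigenPair J l x w := by
  by_contra! hne
  refine hJ (((h.isSymmetric x x).eigenvectorBasis rfl).toBasis.ext fun i => ?_)
  have e := (h.isSymmetric x x).apply_eigenvectorBasis rfl i
  rw [OrthonormalBasis.coe_toBasis, LinearMap.zero_apply, e]
  by_contra h0
  have hl : (h.isSymmetric x x).eigenvalues rfl i ≠ 0 := fun h1 => h0 (by simp [h1])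
  exact hne _ _ (.of_eig hx hl (smul_ne_zero_iff.1 h0).2 e)

namespace IsEigenPair

variable {J : V →ₗ[ℝ] V →ₗ[ℝ] V →ₗ[ℝ] V} {l : ℝ} {x w : V}
  (p : IsEigenPair J l x w) (h : IsJacobiSystem J)
include p

lemma x_ne : x ≠ 0 := fun e => by have := p.xx; simp [e] at this

lemma w_ne : w ≠ 0 := fun e => by have := p.ww; simp [e] at this

include h

lemma xw : ⟪x, w⟫_ℝ = 0 := by
  have := h.selfAdj x x x w
  rw [h.diag, p.eig, inner_smul_right, inner_zero_left] at this
  exact (mul_eq_zero.1 this.symm).resolve_left p.l_ne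

lemma wx : ⟪w, x⟫_ℝ = 0 := by rw [real_inner_comm]; exact p.xw h

lemma eig' : J w w x = l • x := by
  have := h.swap x w p.x_ne p.w_ne l p.l_ne p.eig
  rwa [p.xx, p.ww, one_smul, mul_one] at this

lemma decomp (v : V) : ∃ (a b : ℝ) (u : V), v = a • x + b • w + u ∧
    ⟪u, x⟫_ℝ = 0 ∧ ⟪u, w⟫_ℝ = 0 ∧ ⟪x, u⟫_ℝ = 0 ∧ ⟪w, u⟫_ℝ = 0 := by
  refine ⟨⟪x, v⟫_ℝ, ⟪w, v⟫_ℝ, v - ⟪x, v⟫_ℝ • x - ⟪w, v⟫_ℝ • w, by module, ?_, ?_, ?_, ?_⟩ <;>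
  simp only [inner_sub_left, inner_sub_right, inner_smul_left, inner_smul_right, p.xx, p.ww,
    p.xw h, p.wx h, RCLike.conj_to_real, real_inner_comm] <;> ring

/-- As `w` lies in the range of `J(x)`, `form_range` determines `J(x, w)` completely. -/
lemma mixed (y : V) : J x w y = -(l / 2) • (⟪x, y⟫_ℝ • w + ⟪w, y⟫_ℝ • x) := by
  have := congrArg (fun f => f y) (h.form_range x (l⁻¹ • w) p.x_ne)
  have e : J x x (l⁻¹ • w) = w := by
    rw [map_smul, p.eig, smul_smul, inv_mul_cancel₀ p.l_ne, one_smul]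
  simp only [e, p.eig, LinearMap.smul_apply, symProd_apply, inner_smul_left, p.xx,
    RCLike.conj_to_real] at this
  rw [this]
  module

/-- `J(u)` commutes with `J(x, w)`, a multiple of the swap of `x` and `w`; hence `J(u)` acts on
the plane of `x` and `w` as a scalar. -/
lemma scalar_w (u : V) (hx : ⟪u, x⟫_ℝ = 0) (hw : ⟪u, w⟫_ℝ = 0) :
    J u u w = ⟪J x x u, u⟫_ℝ • w := by
  have hx' : ⟪x, u⟫_ℝ = 0 := by rw [real_inner_comm]; exact hx
  have hw' : ⟪w, u⟫_ℝ = 0 := by rw [real_inner_comm]; exact hw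
  have e := h.comm_add x w u hx' hw' x
  have z : ⟪w, J u u x⟫_ℝ = 0 := by
    rw [real_inner_comm, h.pair, p.mixed h, hx', hw']; simp
  have k : ⟪x, J u u x⟫_ℝ = ⟪J x x u, u⟫_ℝ := by rw [real_inner_comm, h.pair]
  rw [p.mixed h, p.mixed h, z, k, p.xx, p.wx h] at e
  simp only [zero_smul, add_zero, one_smul, map_smul] at e
  exact (smul_right_injective V (by have := p.l_ne; simpa using this) e).symm

lemma scalar_x (u : V) (hx : ⟪u, x⟫_ℝ = 0) (hw : ⟪u, w⟫_ℝ = 0) :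
    J u u x = ⟪J x x u, u⟫_ℝ • x := by
  have hx' : ⟪x, u⟫_ℝ = 0 := by rw [real_inner_comm]; exact hx
  have hw' : ⟪w, u⟫_ℝ = 0 := by rw [real_inner_comm]; exact hw
  have e := h.comm_add x w u hx' hw' w
  rw [p.mixed h, p.mixed h, p.scalar_w h u hx hw, inner_smul_right, inner_smul_right, p.ww,
    p.xw h] at e
  simp only [zero_smul, zero_add, one_smul, map_smul, mul_zero, mul_one] at e
  exact (smul_right_injective V (by have := p.l_ne; simpa using this) e).symm

/-- `J(w)` and `J(x)` agree on the complement of the plane of `x` and `w`. -/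
lemma jacobi_w (v : V) :
    J w w v = J x x v + l • (⟪x, v⟫_ℝ • x) - l • (⟪w, v⟫_ℝ • w) := by
  have : J w w = J x x + (l / 2) • symProd x x - (l / 2) • symProd w w := by
    refine eq_of_quadratic (h.isSymmetric _ _) (((h.isSymmetric _ _).add
      ((isSymmetric_symProd _ _).smul (by simp))).sub
      ((isSymmetric_symProd _ _).smul (by simp))) fun v => ?_
    obtain ⟨a, b, u, hv, hx, hw, hx', hw'⟩ := p.decomp h v
    have k : ⟪J w w u, u⟫_ℝ = ⟪J x x u, u⟫_ℝ := by
      rw [h.pair, p.scalar_w h u hx hw, inner_smul_left, p.ww]; simp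
    have k1 : ⟪J w w u, x⟫_ℝ = 0 := by
      rw [h.selfAdj, p.eig' h, inner_smul_right, hx, mul_zero]
    have k2 : ⟪J x x u, w⟫_ℝ = 0 := by
      rw [h.selfAdj, p.eig, inner_smul_right, hw, mul_zero]
    have k3 : ⟪J w w u, w⟫_ℝ = 0 := by rw [h.selfAdj, h.diag, inner_zero_right]
    have k4 : ⟪J x x u, x⟫_ℝ = 0 := by rw [h.selfAdj, h.diag, inner_zero_right]
    simp only [hv, LinearMap.add_apply, LinearMap.sub_apply, LinearMap.smul_apply, symProd_apply,
      map_add, map_smul, h.diag, p.eig, p.eig' h, inner_add_left, inner_sub_left,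
      inner_add_right, inner_smul_left, inner_smul_right, RCLike.conj_to_real, p.xx, p.ww,
      p.xw h, p.wx h, hx', hw', k, k1, k2, k3, k4, inner_zero_left]
    ring
  rw [this]
  simp only [LinearMap.add_apply, LinearMap.sub_apply, LinearMap.smul_apply, symProd_apply]
  module

/-- All nonzero eigenvalues of `J(x)` coincide.  For `u` orthogonal to `x` and `w`, the operator
`J(w)` commutes with `J(x, J(x)u)`, which sends `x` to a multiple of `J(x)²u`. -/
lemma sq (v : V) : J x x (J x x v) = l • J x x v := by
  have cube : J x x (J x x (J x x v)) = l • J x x (J x x v) := by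
    obtain ⟨a, b, u, hv, -, hw, -, -⟩ := p.decomp h v
    have hAw : ∀ y, ⟪y, w⟫_ℝ = 0 → ⟪J x x y, w⟫_ℝ = 0 := fun y hy => by
      rw [h.selfAdj, p.eig, inner_smul_right, hy, mul_zero]
    have hAx : ∀ y, ⟪x, J x x y⟫_ℝ = 0 := fun y => by
      rw [← h.selfAdj, h.diag, inner_zero_left]
    have e := h.comm_add x (J x x u) w (p.xw h) (hAw u hw) x
    rw [p.eig' h, map_smul, h.apply_left, map_smul, p.jacobi_w h, hAx, real_inner_comm,
      hAw _ (hAw u hw)] at e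
    have e' : J x x (J x x (J x x u)) = l • J x x (J x x u) := by
      have := congrArg (fun t => (-2 : ℝ) • t) e
      simp only [smul_smul, zero_smul, smul_zero, add_zero, sub_zero] at this
      norm_num at this
      rw [← this]; congr 1; ring
    rw [hv]
    simp only [map_add, map_smul, h.diag, p.eig, e', map_zero]
    module
  set A := J x x with hA
  have z : A (A (A v - l • v)) = 0 := by rw [map_sub, map_sub, cube, map_smul, map_smul, sub_self]
  have e : ⟪A (A v - l • v), A (A v - l • v)⟫_ℝ = 0 := by
    rw [hA, h.selfAdj, ← hA, z, inner_zero_right]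
  rw [inner_self_eq_zero, map_sub, map_smul, sub_eq_zero] at e
  exact e

/-! ### Jacobi operators of rank one -/

lemma ker_w (z : V) (hA : J x x z = 0) : ⟪z, w⟫_ℝ = 0 := by
  have e := h.selfAdj x x z w
  rw [hA, p.eig, inner_smul_right, inner_zero_left] at e
  exact (mul_eq_zero.1 e.symm).resolve_left p.l_ne

/-- If `J(x, z)w` vanished, then `w` would be an eigenvector of `J(x + z)`, hence `x + z` one of
`J(w)`; but `J(w)x = l x` while `J(w)z = 0`. -/
lemma mixed_ne_zero (z : V) (hz : z ≠ 0) (hzx : ⟪z, x⟫_ℝ = 0) (hA : J x x z = 0) :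
    J x z w ≠ 0 := fun e => by
  have hzw := p.ker_w h z hA
  have hxz : ⟪x, z⟫_ℝ = 0 := by rw [real_inner_comm]; exact hzx
  have hwz : ⟪w, z⟫_ℝ = 0 := by rw [real_inner_comm]; exact hzw
  have hzz : ⟪z, z⟫_ℝ ≠ 0 := (real_inner_self_pos.2 hz).ne'
  have e1 : J (x + z) (x + z) w = l • w := by
    simp only [map_add, LinearMap.add_apply, h.symm z x, e, p.eig, p.scalar_w h z hzx hzw, hA]
    simp
  have hne : x + z ≠ 0 := fun e0 => by
    have := congrArg (fun t => ⟪t, z⟫_ℝ) e0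
    simp only [inner_add_left, hxz, inner_zero_left, zero_add] at this
    exact hzz this
  have e2 := h.swap (x + z) w hne p.w_ne l p.l_ne e1
  rw [map_add, p.eig' h, p.jacobi_w h z, hA, hxz, hwz] at e2
  have := congrArg (fun t => ⟪t, z⟫_ℝ) e2
  simp only [inner_add_left, inner_smul_left, inner_sub_left, hxz, p.ww, inner_zero_left,
    RCLike.conj_to_real, zero_smul, smul_zero] at this
  have hl := p.l_ne
  have : l * ⟪z, z⟫_ℝ = 0 := by linear_combination -this
  simp_all

/-- If `J(x)` has a kernel on the complement of `x`, it has no two orthogonal eigenvectors `w`, `u`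
for the eigenvalue `l`: the operators `J(w)` and `J(u)` send `J(x, z)w` to `0` and to `l J(x, z)w`,
and as they differ only in the `w` and `u` directions this makes `J(x, z)w` vanish. -/
lemma no_two (u z : V) (q : IsEigenPair J l x u) (hwu : ⟪w, u⟫_ℝ = 0) (hz : z ≠ 0)
    (hzx : ⟪z, x⟫_ℝ = 0) (hA : J x x z = 0) : False := by
  have huw : ⟪u, w⟫_ℝ = 0 := by rw [real_inner_comm]; exact hwu
  refine p.mixed_ne_zero h z hz hzx hA ?_
  have e1 := h.comm_add x z w (p.xw h) (p.ker_w h z hA) w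
  have e2 := h.comm_add x z u (q.xw h) (q.ker_w h z hA) w
  rw [h.diag, map_zero, p.jacobi_w h] at e1
  rw [p.scalar_w h u (q.wx h) huw, q.eig, inner_smul_left, q.ww, q.jacobi_w h] at e2
  have e3 : ⟪w, J x z w⟫_ℝ = 0 := by
    rw [real_inner_comm, h.pair, p.eig' h, inner_smul_left, real_inner_comm, hzx, mul_zero]
  set m := J x z w
  rw [e3] at e1
  simp only [zero_smul, smul_zero, sub_zero, RCLike.conj_to_real, mul_one, map_smul] at e1 e2
  rw [← e1, zero_sub] at e2
  have e4 : m = -⟪u, m⟫_ℝ • u := by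
    refine smul_right_injective V p.l_ne ?_
    beta_reduce
    rw [e2]; module
  have e5 := congrArg (fun t => ⟪u, t⟫_ℝ) e4
  simp only [inner_smul_right, q.ww] at e5
  have e6 : ⟪u, m⟫_ℝ = 0 := by linarith
  rw [e4, e6]; simp

/-- As soon as `J(x)` has a kernel on the complement of `x`, it has rank one. -/
lemma rank_one (z : V) (hz : z ≠ 0) (hzx : ⟪z, x⟫_ℝ = 0) (hA : J x x z = 0) (v : V) :
    J x x v = l • (⟪w, v⟫_ℝ • w) := by
  by_contra hne
  obtain ⟨u, hu⟩ : ∃ u, u = J x x v - l • (⟪w, v⟫_ℝ • w) := ⟨_, rfl⟩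
  have hu0 : u ≠ 0 := by rw [hu]; exact sub_ne_zero.2 hne
  have hAu : J x x u = l • u := by
    rw [hu, map_sub, p.sq h, map_smul, map_smul, p.eig]; module
  have hwu : ⟪w, u⟫_ℝ = 0 := by
    rw [hu, inner_sub_right, ← h.selfAdj, p.eig, inner_smul_left, inner_smul_right,
      inner_smul_right, p.ww]
    simp
  exact p.no_two h _ z (.of_eig p.xx p.l_ne hu0 hAu) (by rw [inner_smul_right, hwu, mul_zero]) hz hzx hA

omit p h in
/-- By homogeneity, `IsEigenPair.sq` extends to vectors that need not be unit. -/
lemma _root_.IsJacobiSystem.exists_sq [FiniteDimensional ℝ V] (h : IsJacobiSystem J) (x : V) :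
    ∃ k : ℝ, ∀ v, J x x (J x x v) = k • J x x v := by
  by_cases hJ : J x x = 0
  · exact ⟨0, fun v => by simp [hJ]⟩
  obtain ⟨y, r, -, hy, hxy⟩ := exists_unit_smul (x := x) fun e => hJ (by simp [e])
  have hJ' : J y y ≠ 0 := fun e => hJ (by
    rw [hxy]; simp [e])
  obtain ⟨l, w, p⟩ := h.exists_eigenPair y hy hJ'
  refine ⟨r ^ 2 * l, fun v => ?_⟩
  simp only [hxy, map_smul, LinearMap.smul_apply, p.sq h]
  module

variable (rk : ∀ v, J x x v = l • (⟪w, v⟫_ℝ • w))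
include rk

lemma mixed_ortho (z : V) (hzx : ⟪z, x⟫_ℝ = 0) (hzw : ⟪z, w⟫_ℝ = 0) :
    ⟪J x z w, x⟫_ℝ = 0 ∧ ⟪J x z w, w⟫_ℝ = 0 ∧ ⟪J x z w, z⟫_ℝ = 0 := by
  have hwz : ⟪w, z⟫_ℝ = 0 := by rw [real_inner_comm]; exact hzw
  have hA : J x x z = 0 := by rw [rk, hwz]; simp
  refine ⟨?_, ?_, ?_⟩
  · rw [h.selfAdj, h.apply_left, hA]; simp
  · rw [h.pair, p.eig' h, inner_smul_left, real_inner_comm, hzx, mul_zero]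
  · rw [h.selfAdj, h.symm, h.apply_left, p.scalar_x h z hzx hzw, hA, inner_smul_right]; simp

/-- If `J(x)` has rank one, so does `J(z)` for a unit vector `z ⊥ x, w`, with the same nonzero
eigenvalue `l` and with eigenvector `J(x, z)w` of length `|l| / 2`. -/
lemma unit_case [FiniteDimensional ℝ V] (z : V) (hzz : ⟪z, z⟫_ℝ = 1) (hzx : ⟪z, x⟫_ℝ = 0) (hzw : ⟪z, w⟫_ℝ = 0) :
    ⟪J x z w, J x z w⟫_ℝ = l ^ 2 / 4 ∧
      ∀ v, J z z v = (4 / l) • (⟪J x z w, v⟫_ℝ • J x z w) := by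
  have hl := p.l_ne
  have hwz : ⟪w, z⟫_ℝ = 0 := by rw [real_inner_comm]; exact hzw
  have hxz : ⟪x, z⟫_ℝ = 0 := by rw [real_inner_comm]; exact hzx
  have hz0 : z ≠ 0 := fun e => by simp [e] at hzz
  have hA : J x x z = 0 := by rw [rk, hwz]; simp
  have hm0 := p.mixed_ne_zero h z hz0 hzx hA
  obtain ⟨mx, mw, mz⟩ := p.mixed_ortho h rk z hzx hzw
  have hzw0 : J z z w = 0 := by rw [p.scalar_w h z hzx hzw, hA]; simp
  have hzx0 : J z z x = 0 := by rw [p.scalar_x h z hzx hzw, hA]; simp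
  obtain ⟨m, hm⟩ : ∃ m, m = J x z w := ⟨_, rfl⟩
  rw [← hm] at hm0 mx mw mz ⊢
  have wm : ⟪w, m⟫_ℝ = 0 := by rw [real_inner_comm]; exact mw
  have hAm : J x x m = 0 := by rw [rk, wm]; simp
  have hzm : J z z m = l • m := by
    have e := h.comm_mixed x z hxz p.x_ne w
    rw [hzz, p.xx, p.eig, hzw0, map_smul, ← hm, hAm] at e
    simpa using e
  have q : IsEigenPair J l z (‖m‖⁻¹ • m) :=
    .of_eig hzz hl hm0 hzm
  have hn : ⟪m, m⟫_ℝ = l ^ 2 / 4 := by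
    -- With respect to `w` and `m / |m|`, `J(x + z)` has diagonal entries `l` and off-diagonal
    -- entries `2|m|`; having a single nonzero eigenvalue forces `2|m| = |l|`.
    obtain ⟨k, hk⟩ := h.exists_sq (x + z)
    have e := hk w
    simp only [map_add, LinearMap.add_apply, h.symm z x, p.eig, hzw0, ← hm, map_smul, hAm, hzm,
      map_zero] at e
    have n1 : ⟪J x z m, w⟫_ℝ = ⟪m, m⟫_ℝ := by rw [h.selfAdj, ← hm]
    have n2 : ⟪J x z m, m⟫_ℝ = 0 := by
      rw [h.pair, p.scalar_x h m mx mw, inner_smul_left, hxz, mul_zero]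
    have ew := congrArg (fun t => ⟪t, w⟫_ℝ) e
    have em := congrArg (fun t => ⟪t, m⟫_ℝ) e
    simp only [inner_add_left, inner_smul_left, inner_zero_left, mw, wm, p.ww, n1, n2,
      RCLike.conj_to_real] at ew em
    have hmm : ⟪m, m⟫_ℝ ≠ 0 := (real_inner_self_pos.2 hm0).ne'
    have hk2 : k = 2 * l := by
      refine mul_right_cancel₀ hmm ?_
      linear_combination -em / 2
    rw [hk2] at ew
    linear_combination ew / 4
  refine ⟨hn, fun v => ?_⟩
  rw [q.rank_one h x p.x_ne hxz hzx0, inner_smul_left]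
  have : ‖m‖ ≠ 0 := norm_ne_zero_iff.2 hm0
  rw [real_inner_self_eq_norm_sq] at hn
  simp only [smul_smul, RCLike.conj_to_real]
  congr 1
  field_simp
  rw [hn]; field_simp

/-- `unit_case` without normalization of `z`. -/
lemma J_perp [FiniteDimensional ℝ V] (z : V) (hzx : ⟪z, x⟫_ℝ = 0) (hzw : ⟪z, w⟫_ℝ = 0) :
    ⟪J x z w, J x z w⟫_ℝ = l ^ 2 / 4 * ⟪z, z⟫_ℝ ∧
      ∀ v, J z z v = (4 / l) • (⟪J x z w, v⟫_ℝ • J x z w) := by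
  by_cases hz : z = 0
  · simp [hz]
  obtain ⟨y, r, hr, hy, hzy⟩ := exists_unit_smul hz
  have hyx : ⟪y, x⟫_ℝ = 0 := by
    rw [hzy, inner_smul_left] at hzx; exact (mul_eq_zero.1 hzx).resolve_left hr
  have hyw : ⟪y, w⟫_ℝ = 0 := by
    rw [hzy, inner_smul_left] at hzw; exact (mul_eq_zero.1 hzw).resolve_left hr
  obtain ⟨h1, h2⟩ := p.unit_case h rk y hy hyx hyw
  refine ⟨?_, fun v => ?_⟩
  · simp only [hzy, map_smul, LinearMap.smul_apply, inner_smul_left, inner_smul_right, h1, hy,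
      RCLike.conj_to_real]
    ring
  · simp only [hzy, map_smul, LinearMap.smul_apply, inner_smul_left, h2, RCLike.conj_to_real]
    module

omit rk in
/-- If `J(x)` has rank one, the almost complex structure sends `x` to `w`, `w` to `-x`, and
`z ⊥ x, w` to `(2 / l) J(x, z)w`; all three are given by the one formula below. -/
theorem rank_one_case [FiniteDimensional ℝ V] (rk : ∀ v, J x x v = l • (⟪w, v⟫_ℝ • w)) :
    ∃ T : V →ₗ[ℝ] V, T ∘ₗ T = -LinearMap.id ∧ (∀ u v : V, ⟪T u, v⟫_ℝ = -⟪u, T v⟫_ℝ) ∧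
      ∀ v y, ⟪J v v y, y⟫_ℝ = l * ⟪T v, y⟫_ℝ ^ 2 := by
  have hl := p.l_ne
  let T : V →ₗ[ℝ] V := {
    toFun := fun v => (2 / l) • J x v w - ⟪x, v⟫_ℝ • w
    map_add' := fun a b => by
      simp only [map_add, LinearMap.add_apply, inner_add_right]; module
    map_smul' := fun c a => by
      simp only [map_smul, LinearMap.smul_apply, inner_smul_right, RingHom.id_apply]; module }
  have hT : ∀ v, T v = (2 / l) • J x v w - ⟪x, v⟫_ℝ • w := fun _ => rfl
  have hTx : T x = w := by
    rw [hT, p.eig, p.xx, smul_smul, div_mul_cancel₀ _ hl]; module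
  have hTw : T w = -x := by
    rw [hT, p.mixed h, p.xw h, p.ww, zero_smul, one_smul, zero_add, sub_zero, smul_smul]
    have : 2 / l * -(l / 2) = -1 := by field_simp
    rw [this]; module
  have hTz : ∀ z, ⟪x, z⟫_ℝ = 0 → J x z w = (l / 2) • T z := fun z hz => by
    rw [hT, hz, zero_smul, sub_zero, smul_smul]
    have : l / 2 * (2 / l) = 1 := by field_simp
    rw [this, one_smul]
  have hl2 : l / 2 ≠ 0 := by simpa using hl
  have ortho : ∀ z, ⟪z, x⟫_ℝ = 0 → ⟪z, w⟫_ℝ = 0 →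
      ⟪T z, x⟫_ℝ = 0 ∧ ⟪T z, w⟫_ℝ = 0 ∧ ⟪T z, z⟫_ℝ = 0 ∧ ⟪T z, T z⟫_ℝ = ⟪z, z⟫_ℝ := by
    intro z hzx hzw
    have hxz : ⟪x, z⟫_ℝ = 0 := by rw [real_inner_comm]; exact hzx
    obtain ⟨h1, h2, h3⟩ := p.mixed_ortho h rk z hzx hzw
    have h4 := (p.J_perp h rk z hzx hzw).1
    rw [hTz z hxz, inner_smul_left, RCLike.conj_to_real] at h1 h2 h3 h4
    rw [inner_smul_right] at h4
    refine ⟨(mul_eq_zero.1 h1).resolve_left hl2, (mul_eq_zero.1 h2).resolve_left hl2,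
      (mul_eq_zero.1 h3).resolve_left hl2, ?_⟩
    refine mul_left_cancel₀ (pow_ne_zero 2 hl2) ?_
    linear_combination h4
  have skew0 : ∀ v, ⟪T v, v⟫_ℝ = 0 := fun v => by
    obtain ⟨a, b, z, hv, hzx, hzw, hxz, hwz⟩ := p.decomp h v
    obtain ⟨h1, h2, h3, -⟩ := ortho z hzx hzw
    simp only [hv, map_add, map_smul, hTx, hTw, inner_add_left, inner_add_right, inner_smul_left,
      inner_smul_right, inner_neg_left, h1, h2, h3, hxz, hwz, p.xx, p.ww, p.xw h, p.wx h,
      RCLike.conj_to_real]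
    ring
  have iso0 : ∀ v, ⟪T v, T v⟫_ℝ = ⟪v, v⟫_ℝ := fun v => by
    obtain ⟨a, b, z, hv, hzx, hzw, hxz, hwz⟩ := p.decomp h v
    obtain ⟨h1, h2, -, h4⟩ := ortho z hzx hzw
    have h1' : ⟪x, T z⟫_ℝ = 0 := by rw [real_inner_comm]; exact h1
    have h2' : ⟪w, T z⟫_ℝ = 0 := by rw [real_inner_comm]; exact h2
    simp only [hv, map_add, map_smul, hTx, hTw, inner_add_left, inner_add_right, inner_smul_left,
      inner_smul_right, inner_neg_left, inner_neg_right, h1, h2, h1', h2', h4, hxz, hwz, hzx, hzw,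
      p.xx, p.ww, p.xw h, p.wx h, RCLike.conj_to_real]
    ring
  have skew : ∀ u v : V, ⟪T u, v⟫_ℝ = -⟪u, T v⟫_ℝ := fun u v => by
    have := skew0 (u + v)
    simp only [map_add, inner_add_left, inner_add_right, skew0] at this
    rw [real_inner_comm (T v) u]
    linear_combination this
  refine ⟨T, ?_, skew, fun v y => ?_⟩
  -- A skew isometry squares to `-1`.
  · ext v
    refine ext_inner_right ℝ fun y => ?_
    have := iso0 (v + y)
    simp only [map_add, inner_add_left, inner_add_right, iso0, real_inner_comm (T v) (T y),
      real_inner_comm v y] at this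
    rw [LinearMap.comp_apply, skew, LinearMap.neg_apply, inner_neg_left, LinearMap.id_apply]
    linarith
  · obtain ⟨a, b, z, hv, hzx, hzw, hxz, hwz⟩ := p.decomp h v
    obtain ⟨h1, h2, -, -⟩ := ortho z hzx hzw
    have hAz : J x x z = 0 := by rw [rk, hwz]; simp
    have hBz : J w w z = 0 := by rw [p.jacobi_w h, hAz, hxz, hwz]; simp
    have kz : J z z y = l • (⟪T z, y⟫_ℝ • T z) := by
      rw [(p.J_perp h rk z hzx hzw).2, hTz z hxz]
      simp only [inner_smul_left, smul_smul, RCLike.conj_to_real]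
      congr 1; field_simp; norm_num
    have wzx : J w z x = -J x z w := by
      have := h.bianchi w z x
      rw [p.mixed h, hxz, hwz, h.symm z x] at this
      simp only [zero_smul, add_zero, smul_zero] at this
      exact eq_neg_of_add_eq_zero_left this
    -- The forms of `J(x, z)` and `J(w, z)` vanish at `u ⊥ x, w`, because `J(u)x` and `J(u)w` are
    -- multiples of `x` and `w`, hence orthogonal to `z`.
    have kmix : ⟪J x z y, y⟫_ℝ = l * (⟪w, y⟫_ℝ * ⟪T z, y⟫_ℝ) ∧
        ⟪J w z y, y⟫_ℝ = -(l * (⟪x, y⟫_ℝ * ⟪T z, y⟫_ℝ)) := by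
      obtain ⟨c, d, u, hy, hux, huw, hxu, hwu⟩ := p.decomp h y
      have ux : ⟪J x z u, x⟫_ℝ = 0 := by rw [h.selfAdj, h.apply_left, hAz]; simp
      have uw : ⟪J w z u, w⟫_ℝ = 0 := by rw [h.selfAdj, h.apply_left, hBz]; simp
      have uw' : ⟪J x z u, w⟫_ℝ = l / 2 * ⟪T z, u⟫_ℝ := by
        rw [h.selfAdj, hTz z hxz, inner_smul_right, real_inner_comm]
      have ux' : ⟪J w z u, x⟫_ℝ = -(l / 2 * ⟪T z, u⟫_ℝ) := by
        rw [h.selfAdj, wzx, hTz z hxz, inner_neg_right, inner_smul_right, real_inner_comm]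
      have uu : ⟪J x z u, u⟫_ℝ = 0 := by
        rw [h.pair, p.scalar_x h u hux huw, inner_smul_left, hxz, mul_zero]
      have uu' : ⟪J w z u, u⟫_ℝ = 0 := by
        rw [h.pair, p.scalar_w h u hux huw, inner_smul_left, hwz, mul_zero]
      constructor <;>
      · simp only [hy, map_add, map_smul, inner_add_left, inner_add_right, inner_smul_left,
          inner_smul_right, h.apply_left, hAz, hBz, wzx, hTz z hxz, h1, h2, ux, uw, ux', uw', uu,
          uu', p.xx, p.ww, p.xw h, p.wx h, hxu, hwu, RCLike.conj_to_real, inner_neg_left,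
          smul_zero, inner_zero_left]
        ring
    obtain ⟨k1, k2⟩ := kmix
    have kx : J x x y = l • (⟪w, y⟫_ℝ • w) := rk y
    have kw : J w w y = l • (⟪x, y⟫_ℝ • x) := by rw [p.jacobi_w h, kx]; module
    simp only [hv, map_add, map_smul, LinearMap.add_apply, LinearMap.smul_apply, hTx, hTw, kx, kw,
      kz, k1, k2, h.symm w x, h.symm z x, h.symm z w, p.mixed h, inner_add_left, inner_smul_left,
      inner_neg_left, RCLike.conj_to_real]
    ring

/-! ### Jacobi operators of full rank -/

omit rk in
/-- If `J(x)` is injective on the complement of `x`, every Jacobi operator is that of constant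
curvature `l`. -/
theorem full_rank_case (inj : ∀ z, ⟪z, x⟫_ℝ = 0 → J x x z = 0 → z = 0) (v y : V) :
    ⟪J v v y, y⟫_ℝ = l * (⟪v, v⟫_ℝ * ⟪y, y⟫_ℝ - ⟪v, y⟫_ℝ ^ 2) := by
  have hl := p.l_ne
  have perp : ∀ u, ⟪u, x⟫_ℝ = 0 → J x x u = l • u := fun u hu => by
    refine sub_eq_zero.1 (inj _ ?_ ?_)
    · rw [inner_sub_left, h.selfAdj, h.diag, inner_smul_left, hu, inner_zero_right]; simp
    · rw [map_sub, p.sq h, map_smul, sub_self]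
  have hAx : ∀ u, J x x u = l • (u - ⟪x, u⟫_ℝ • x) := fun u => by
    rw [← perp _ (by rw [inner_sub_left, inner_smul_left, p.xx, real_inner_comm]; simp)]
    simp [h.diag]
  -- Every unit vector orthogonal to `x` can play the role of `w`; choose one in the plane of
  -- `x` and `v`.
  obtain ⟨a, b, u, hv, hu⟩ : ∃ (a b : ℝ) (u : V), v = a • x + b • u ∧ IsEigenPair J l x u := by
    by_cases h0 : v - ⟪x, v⟫_ℝ • x = 0
    · exact ⟨⟪x, v⟫_ℝ, 0, w, by rw [sub_eq_zero.1 h0, inner_smul_right, p.xx]; module, p⟩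
    · have e := perp _ (show ⟪v - ⟪x, v⟫_ℝ • x, x⟫_ℝ = 0 by
        rw [inner_sub_left, inner_smul_left, p.xx, real_inner_comm]; simp)
      refine ⟨⟪x, v⟫_ℝ, ‖v - ⟪x, v⟫_ℝ • x‖, _, ?_, .of_eig p.xx hl h0 e⟩
      rw [smul_smul, mul_inv_cancel₀ (norm_ne_zero_iff.2 h0)]; module
  simp only [hv, map_add, map_smul, LinearMap.add_apply, LinearMap.smul_apply, h.symm u x,
    hu.jacobi_w h, hu.mixed h, hAx, inner_add_left, inner_add_right, inner_smul_left,
    inner_smul_right, inner_sub_left, RCLike.conj_to_real, hu.xx, hu.ww, hu.xw h, hu.wx h]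
  ring

end IsEigenPair

/-! ### Passage between the curvature and the Jacobi operators -/

/-- The form `⟨J(a, b)c, d⟩` recovered from the biquadratic form `⟨J(v)y, y⟩`. -/
lemma IsJacobiSystem.polarization {J : V →ₗ[ℝ] V →ₗ[ℝ] V →ₗ[ℝ] V} (h : IsJacobiSystem J)
    (a b c d : V) : 4 * ⟪J a b c, d⟫_ℝ =
      ⟪J (a + b) (a + b) (c + d), c + d⟫_ℝ - ⟪J a a (c + d), c + d⟫_ℝ - ⟪J b b (c + d), c + d⟫_ℝ
      - ⟪J (a + b) (a + b) c, c⟫_ℝ + ⟪J a a c, c⟫_ℝ + ⟪J b b c, c⟫_ℝ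
      - ⟪J (a + b) (a + b) d, d⟫_ℝ + ⟪J a a d, d⟫_ℝ + ⟪J b b d, d⟫_ℝ := by
  have : ⟪J a b d, c⟫_ℝ = ⟪J a b c, d⟫_ℝ := by rw [h.selfAdj, real_inner_comm]
  simp only [map_add, LinearMap.add_apply, inner_add_left, inner_add_right, h.symm b a, this]
  ring

/-- `JacobiP` as a trilinear map. -/
def jacobiMap (R : V →ₗ[ℝ] V →ₗ[ℝ] V →ₗ[ℝ] V) : V →ₗ[ℝ] V →ₗ[ℝ] V →ₗ[ℝ] V :=
  LinearMap.mk₂ ℝ (JacobiP R)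
    (fun a b c => by ext; simp [JacobiP]; module)
    (fun r a b => by ext; simp [JacobiP]; module)
    (fun a b c => by ext; simp [JacobiP]; module)
    (fun r a b => by ext; simp [JacobiP]; module)

lemma jacobiMap_apply (R : V →ₗ[ℝ] V →ₗ[ℝ] V →ₗ[ℝ] V) (a b c : V) :
    jacobiMap R a b c = (1 / 2 : ℝ) • R c a b + (1 / 2 : ℝ) • R c b a := rfl

lemma jacobiMap_diag (R : V →ₗ[ℝ] V →ₗ[ℝ] V →ₗ[ℝ] V) (a : V) : jacobiMap R a a = Jacobi R a := by
  ext c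
  rw [jacobiMap_apply]
  change _ = R c a a
  module

lemma isJacobiSystem_jacobiMap {R : V →ₗ[ℝ] V →ₗ[ℝ] V →ₗ[ℝ] V} (hR : IsCurvatureOperator R)
    (hT : JacobiTsankov R) : IsJacobiSystem (jacobiMap R) := by
  obtain ⟨hp, ha, hb⟩ := hR
  have ha' : ∀ x y z w : V, ⟪R x y z, w⟫_ℝ = -⟪R x y w, z⟫_ℝ := fun x y z w => by
    rw [hp x y z w, ha, hp w z x y]
  have hop : ∀ x y z, R x y z = -R y x z := fun x y z =>
    ext_inner_right ℝ fun w => by rw [ha, inner_neg_left]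
  refine ⟨fun a b => ?_, fun a b c d => ?_, fun a b c d => ?_, fun a b c => ?_,
    fun x y hxy v => ?_⟩
  · ext c
    simp only [jacobiMap_apply]; module
  · rw [real_inner_comm _ c]
    simp only [jacobiMap_apply, inner_add_left, inner_smul_left]
    rw [hp c a b d, hp c b a d, ha b d c a, ha' d b c a, ha a d c b, ha' d a c b]
    ring
  · simp only [jacobiMap_apply, inner_add_left, inner_smul_left]
    rw [ha c a b d, ha' a c b d, hp c b a d]
    ring
  · simp only [jacobiMap_apply]
    rw [hop c a b, hop c b a, hop a b c]
    module
  · simp only [jacobiMap_diag]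
    exact LinearMap.congr_fun (hT x y hxy) v

/-- The curvature operator recovered from its polarized Jacobi operators. -/
lemma curvature_eq {R : V →ₗ[ℝ] V →ₗ[ℝ] V →ₗ[ℝ] V} (hR : IsCurvatureOperator R) (x y z w : V) :
    ⟪R x y z, w⟫_ℝ = 2 / 3 * (⟪jacobiMap R y z x, w⟫_ℝ - ⟪jacobiMap R x z y, w⟫_ℝ) := by
  obtain ⟨-, ha, hb⟩ := hR
  simp only [jacobiMap_apply, inner_add_left, inner_smul_left, RCLike.conj_to_real]
  linear_combination 1 / 3 * hb x y z w + 1 / 3 * ha y x z w - 1 / 3 * ha x z y w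


theorem stmt18 [FiniteDimensional ℝ V] (hm : 3 ≤ Module.finrank ℝ V)
    (R : V →ₗ[ℝ] V →ₗ[ℝ] V →ₗ[ℝ] V) (hR : IsCurvatureOperator R)
    (hT : JacobiTsankov R) :
    (∃ c : ℝ, ∀ x y z : V, R x y z = c • (⟪y, z⟫_ℝ • x - ⟪x, z⟫_ℝ • y)) ∨
    (∃ (c : ℝ) (Θ : V →ₗ[ℝ] V), Θ ∘ₗ Θ = -LinearMap.id ∧
      (∀ u v : V, ⟪Θ u, v⟫_ℝ = -⟪u, Θ v⟫_ℝ) ∧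
      ∀ x y z : V, R x y z =
        c • (⟪Θ y, z⟫_ℝ • Θ x - ⟪Θ x, z⟫_ℝ • Θ y - (2 * ⟪Θ x, y⟫_ℝ) • Θ z)) := by
  have h := isJacobiSystem_jacobiMap hR hT
  by_cases hJ : ∀ x : V, ⟪x, x⟫_ℝ = 1 → jacobiMap R x x = 0
  · left
    refine ⟨0, fun x y z => ?_⟩
    have h0 : ∀ v, jacobiMap R v v = 0 := fun v => by
      by_cases hv : v = 0
      · simp [hv]
      obtain ⟨u, r, -, hu, e⟩ := exists_unit_smul hv
      simp [e, hJ u hu]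
    have hp := h.polarization
    simp only [h0, LinearMap.zero_apply, inner_zero_left] at hp
    rw [zero_smul]
    refine ext_inner_right ℝ fun w => ?_
    rw [curvature_eq hR, inner_zero_left]
    linarith [hp y z x w, hp x z y w]
  push Not at hJ
  obtain ⟨x, hx, hxJ⟩ := hJ
  obtain ⟨l, w, p⟩ := h.exists_eigenPair x hx hxJ
  by_cases inj : ∀ z, ⟪z, x⟫_ℝ = 0 → jacobiMap R x x z = 0 → z = 0
  · left
    have hp := h.polarization
    simp only [p.full_rank_case h inj] at hp
    refine ⟨l, fun x y z => ext_inner_right ℝ fun w => ?_⟩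
    have e₁ := hp y z x w
    have e₂ := hp x z y w
    rw [curvature_eq hR]
    simp only [inner_add_left, inner_add_right, inner_sub_left, inner_smul_left,
      RCLike.conj_to_real, real_inner_comm x y, real_inner_comm x z, real_inner_comm x w,
      real_inner_comm y z, real_inner_comm y w] at e₁ e₂ ⊢
    linear_combination (1 / 6) * (e₁ - e₂)
  · right
    push Not at inj
    obtain ⟨z, hzx, hA, hz⟩ := inj
    obtain ⟨T, hTT, hTs, hTJ⟩ := p.rank_one_case h (p.rank_one h z hz hzx hA)
    have hp := h.polarization
    simp only [hTJ] at hp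
    refine ⟨l / 3, T, hTT, hTs, fun x y z => ext_inner_right ℝ fun w => ?_⟩
    have e₁ := hp y z x w
    have e₂ := hp x z y w
    have s : ∀ u v, ⟪T u, v⟫_ℝ = -⟪T v, u⟫_ℝ := fun u v => by rw [hTs, real_inner_comm]
    rw [curvature_eq hR]
    simp only [map_add, inner_add_left, inner_add_right, inner_sub_left, inner_smul_left,
      RCLike.conj_to_real] at e₁ e₂ ⊢
    rw [s z x, s y x, s z y] at *
    linear_combination (1 / 6) * (e₁ - e₂)
end
end
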